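/- Let a, b, c, d be real numbers with ad − bc = 1 and b ≠ 0, and let f ∈ L¹(ℝ, ℂ). Then for every real x and every s ∈ ℝ, S_A(cos(x·t) f(t))(s) = (e^{-(i/2)·d·b·x²}/2) · ( e^{-i·d·x·s} · S_A f(s + bx) + e^{i·d·x·s} · S_A f(s − bx) ). -/

import Mathlib

open MeasureTheory Filter

noncomputable def sqrtTwoPiIb (b : ℝ) : ℂ := (2 * (Real.pi : ℂ) * Complex.I * (b:ℂ)) ^ ((1:ℂ)/2)

noncomputable def CCT (a b d : ℝ) (f : ℝ → ℂ) (s : ℝ) : ℂ :=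
  (1 / sqrtTwoPiIb b) * Complex.exp ((Complex.I/2) * ((d:ℂ)/(b:ℂ)) * (s:ℂ)^2) *
    ∫ t : ℝ, (Real.cos ((s/b) * t) : ℂ) *
      Complex.exp ((Complex.I/2) * ((a:ℂ)/(b:ℂ)) * (t:ℂ)^2) * f t
noncomputable def SCT (a b d : ℝ) (f : ℝ → ℂ) (s : ℝ) : ℂ :=
  (1 / sqrtTwoPiIb b) * Complex.exp ((Complex.I/2) * ((d:ℂ)/(b:ℂ)) * (s:ℂ)^2) *
    ∫ t : ℝ, (Real.sin ((s/b) * t) : ℂ) *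
      Complex.exp ((Complex.I/2) * ((a:ℂ)/(b:ℂ)) * (t:ℂ)^2) * f t

/-!
The canonical sine transform is a chirp multiplication, followed by a classical sine transform,
followed by another chirp multiplication. Multiplying by `cos (x * t)` shifts the frequency of the
sine transform by `± x`, since `2 sin α cos β = sin (α + β) + sin (α - β)`. At the frequency
`s / b` this is a shift of `s` by `± b * x`, and moving the outer chirp from `s` to `s ± b * x`
costs exactly the exponential factors of the formula.
-/

section SineTransform

variable {E : Type*} [NormedAddCommGroup E] [NormedSpace ℝ E] {μ : Measure ℝ} {g : ℝ → E}

/-- The unnormalised sine transform of a vector-valued function `g` with respect to `μ`, at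
frequency `u`; the integral is taken over the whole line. -/
noncomputable def sineTransform (μ : Measure ℝ) (g : ℝ → E) (u : ℝ) : E :=
  ∫ t, Real.sin (u * t) • g t ∂μ

lemma integrable_sin_smul (hg : Integrable g μ) (u : ℝ) :
    Integrable (fun t ↦ Real.sin (u * t) • g t) μ :=
  hg.bdd_smul 1 (by fun_prop) (.of_forall fun t ↦ Real.abs_sin_le_one (u * t))

lemma sineTransform_cos_smul (hg : Integrable g μ) (x u : ℝ) :
    sineTransform μ (fun t ↦ Real.cos (x * t) • g t) u =
      (1 / 2 : ℝ) • (sineTransform μ g (u + x) + sineTransform μ g (u - x)) := by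
  have product_to_sum (t : ℝ) : Real.sin (u * t) * Real.cos (x * t) =
      1 / 2 * (Real.sin ((u + x) * t) + Real.sin ((u - x) * t)) := by
    rw [add_mul, sub_mul, Real.sin_add, Real.sin_sub]
    ring
  simp only [sineTransform]
  rw [← integral_add (integrable_sin_smul hg _) (integrable_sin_smul hg _), ← integral_smul]
  simp only [smul_smul, product_to_sum, ← add_smul]

end SineTransform

/-- The linear chirp `t ↦ exp (i κ t² / 2)` of rate `κ`: the quadratic phase by which the canonical
transforms multiply before (`κ = a / b`) and after (`κ = d / b`) the trigonometric integral. -/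
noncomputable def chirp (κ t : ℝ) : ℂ :=
  Complex.exp ((Complex.I / 2) * (κ : ℂ) * (t : ℂ) ^ 2)

@[fun_prop]
lemma continuous_chirp (κ : ℝ) : Continuous (chirp κ) := by
  unfold chirp
  fun_prop

lemma norm_chirp (κ t : ℝ) : ‖chirp κ t‖ = 1 := by
  have phase : (Complex.I / 2) * (κ : ℂ) * (t : ℂ) ^ 2 =
      ((κ * t ^ 2 / 2 : ℝ) : ℂ) * Complex.I := by
    push_cast
    ring
  rw [chirp, phase, Complex.norm_exp_ofReal_mul_I]

lemma integrable_chirp_mul {μ : Measure ℝ} {f : ℝ → ℂ} (hf : Integrable f μ) (κ : ℝ) :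
    Integrable (fun t ↦ chirp κ t * f t) μ :=
  hf.bdd_mul (by fun_prop) (.of_forall fun t ↦ (norm_chirp κ t).le)

lemma chirp_eq_exp_mul_chirp_add (κ s y : ℝ) :
    chirp κ s = Complex.exp (-(Complex.I / 2) * (κ : ℂ) * (y : ℂ) ^ 2) *
      Complex.exp (-Complex.I * (κ : ℂ) * (y : ℂ) * (s : ℂ)) * chirp κ (s + y) := by
  simp only [chirp, ← Complex.exp_add]
  push_cast
  ring_nf

lemma chirp_div_eq_exp_mul_chirp_add {b : ℝ} (hb : b ≠ 0) (d s x : ℝ) :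
    chirp (d / b) s = Complex.exp (-(Complex.I / 2) * (d : ℂ) * (b : ℂ) * (x : ℂ) ^ 2) *
      Complex.exp (-Complex.I * (d : ℂ) * (x : ℂ) * (s : ℂ)) * chirp (d / b) (s + b * x) := by
  have hbC : (b : ℂ) ≠ 0 := Complex.ofReal_ne_zero.mpr hb
  rw [chirp_eq_exp_mul_chirp_add (d / b) s (b * x)]
  push_cast
  congr 3 <;> field_simp

lemma sineTransform_chirp_mul_cos_mul {μ : Measure ℝ} {f : ℝ → ℂ} (hf : Integrable f μ)
    (κ x u : ℝ) :
    sineTransform μ (fun t ↦ chirp κ t * ((Real.cos (x * t) : ℂ) * f t)) u =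
      1 / 2 * (sineTransform μ (fun t ↦ chirp κ t * f t) (u + x) +
        sineTransform μ (fun t ↦ chirp κ t * f t) (u - x)) := by
  have h := sineTransform_cos_smul (integrable_chirp_mul hf κ) x u
  simpa only [Complex.real_smul, mul_left_comm, Complex.ofReal_div, Complex.ofReal_one,
    Complex.ofReal_ofNat] using h

lemma SCT_eq_chirp_mul_sineTransform (a b d : ℝ) (f : ℝ → ℂ) (s : ℝ) :
    SCT a b d f s = 1 / sqrtTwoPiIb b * chirp (d / b) s *
      sineTransform volume (fun t ↦ chirp (a / b) t * f t) (s / b) := by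
  simp only [SCT, chirp, sineTransform, Complex.real_smul, Complex.ofReal_div, mul_assoc]

theorem sct_cos_mul (a b c d : ℝ) (hb : b ≠ 0) (hA : a * d - b * c = 1)
    (f : ℝ → ℂ) (hf : Integrable f) :
    ∀ x s : ℝ, SCT a b d (fun t => (Real.cos (x * t) : ℂ) * f t) s =
      (Complex.exp (-(Complex.I/2) * (d:ℂ) * (b:ℂ) * (x:ℂ)^2) / 2) *
        (Complex.exp (-Complex.I * (d:ℂ) * (x:ℂ) * (s:ℂ)) * SCT a b d f (s + b * x) +
         Complex.exp (Complex.I * (d:ℂ) * (x:ℂ) * (s:ℂ)) * SCT a b d f (s - b * x)) := by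
  intro x s
  have freq_right : (s + b * x) / b = s / b + x := by field_simp
  have freq_left : (s - b * x) / b = s / b - x := by field_simp
  have shift_right := chirp_div_eq_exp_mul_chirp_add hb d s x
  have shift_left : chirp (d / b) s =
      Complex.exp (-(Complex.I / 2) * d * b * x ^ 2) * Complex.exp (Complex.I * d * x * s) *
        chirp (d / b) (s - b * x) := by
    simpa [sub_eq_add_neg] using chirp_div_eq_exp_mul_chirp_add hb d s (-x)
  simp only [SCT_eq_chirp_mul_sineTransform, sineTransform_chirp_mul_cos_mul hf, freq_right,
    freq_left]
  let S := sineTransform volume (fun t ↦ chirp (a / b) t * f t)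
  linear_combination
    1 / sqrtTwoPiIb b / 2 * (S (s / b + x) * shift_right + S (s / b - x) * shift_left)
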